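/- Let α ∈ ℝ and let u, v, p, q: ℝ → ℝ be smooth. Define, for smooth ψ: ℝ → ℝ, the operators Lψ = ψ'''' − 2uψ'' − 2u_xψ' + (−u_{xx} + u² + v)ψ, Mψ = −2p_xψ'' − 2p_{xx}ψ' + (−p_{xxx} + up_x + q_x)ψ, and 16·Pψ = 8pψ''' − 4p_xψ'' + 2(p_{xx} − 6up − 2q)ψ' − (p_{xxx} + 6u_xp − 2up_x − 6q_x)ψ. Then the identity M(Lψ − αψ) = P(Lψ) − L(Pψ) holds for every smooth ψ and every x ∈ ℝ if and only if the following two equations hold identically on ℝ: (E1) p_{xxxxx} + 2u p_{xxx} + 8u_x p_{xx} + 2(u_{xx} + 4u² + 8(v − α))p_x − 2(u_{xxx} − 6uu_x − 6v_x)p − 10q_{xxx} + 8u q_x + 4u_x q = 0; (E2) u p_{xxxxx} + 4u_x p_{xxxx} + 2(3u_{xx} − 2u²)p_{xxx} + (4u_{xxx} − 10uu_x + (5/2)v_x)p_{xx} + (u_{xxxx} − 4uu_{xx} − 2u_x² + 3v_{xx} − 4u(v − α))p_x + (v_{xxx} − 3uv_x)p − q_{xxxxx} + 4u q_{xxx}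 + 2u_x q_{xx} + 4(v − α)q_x + v_x q = 0. -/

import Mathlib

/-!
Write `R = M(L - α) - [P, L]`, a differential operator in `x`. Expanding with the Leibniz rule, the
coefficients of `D⁷, …, D³` cancel, and with `E₁`, `E₂` the left-hand sides of the two equations,
`16 R = -2 E₁ D² - 2 E₁' D + (-E₁'' + 2 u E₁ + 4 E₂)`.
Hence `R = 0` if `E₁ = E₂ = 0`. Conversely, evaluating `Rψ = 0` at `x` for `ψ(y) = (y - x)²` gives
`E₁(x) = 0`, and then `ψ = 1` gives `E₂ = 0`.

The expansion is purely algebraic, so it is carried out in an arbitrary commutative ring with a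
derivation (`DSAlg.residual`) and then applied to the ring of smooth functions with `d/dx`.
-/

noncomputable section

/-- The DS-III Lax operator `L = (D² - u)² + v`. -/
def LDS (u v ψ : ℝ → ℝ) : ℝ → ℝ := fun x =>
  deriv^[4] ψ x - 2 * u x * deriv^[2] ψ x - 2 * deriv u x * deriv ψ x
    + (-deriv^[2] u x + u x ^ 2 + v x) * ψ x

/-- The operator `M = -2p_xD² - 2p_{xx}D + (-p_{xxx} + up_x + q_x)` playing the role of `L_z`. -/
def MDS (u p q ψ : ℝ → ℝ) : ℝ → ℝ := fun x =>
  -2 * deriv p x * deriv^[2] ψ x - 2 * deriv^[2] p x * deriv ψ x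
    + (-deriv^[3] p x + u x * deriv p x + deriv q x) * ψ x

/-- The operator `P` with
`16P = 8pD³ - 4p_xD² + 2(p_{xx} - 6up - 2q)D - (p_{xxx} + 6u_xp - 2up_x - 6q_x)`. -/
def PDS (u p q ψ : ℝ → ℝ) : ℝ → ℝ := fun x =>
  (8 * p x * deriv^[3] ψ x - 4 * deriv p x * deriv^[2] ψ x
    + 2 * (deriv^[2] p x - 6 * u x * p x - 2 * q x) * deriv ψ x
    - (deriv^[3] p x + 6 * deriv u x * p x - 2 * u x * deriv p x
        - 6 * deriv q x) * ψ x) / 16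

namespace DSAlg

variable {A : Type*} [CommRing A] [Algebra ℝ A] (d : Derivation ℝ A A)

/-- `L = (D² - u)² + v` in a differential ring. -/
def opL (u v f : A) : A :=
  d (d (d (d f))) - 2 * u * d (d f) - 2 * d u * d f + (-d (d u) + u ^ 2 + v) * f

/-- The operator `M` in a differential ring. -/
def opM (u p q f : A) : A :=
  -2 * d p * d (d f) - 2 * d (d p) * d f + (-d (d (d p)) + u * d p + d q) * f

/-- The operator `P` in a differential ring; `h` stands for the constant `1/16`. -/
def opP (h u p q f : A) : A :=
  (8 * p * d (d (d f)) - 4 * d p * d (d f) + 2 * (d (d p) - 6 * u * p - 2 * q) * d f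
    - (d (d (d p)) + 6 * d u * p - 2 * u * d p - 6 * d q) * f) * h

/-- The left-hand side of the first equation; `a` stands for the constant `α`. -/
def eq₁ (a u v p q : A) : A :=
  d (d (d (d (d p)))) + 2 * u * d (d (d p)) + 8 * d u * d (d p)
    + 2 * (d (d u) + 4 * u ^ 2 + 8 * (v - a)) * d p
    - 2 * (d (d (d u)) - 6 * u * d u - 6 * d v) * p
    - 10 * d (d (d q)) + 8 * u * d q + 4 * d u * q

/-- Twice the left-hand side of the second equation (doubled to have integer coefficients);
`a` stands for the constant `α`. -/
def eq₂ (a u v p q : A) : A :=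
  2 * u * d (d (d (d (d p)))) + 8 * d u * d (d (d (d p)))
    + 4 * (3 * d (d u) - 2 * u ^ 2) * d (d (d p))
    + (8 * d (d (d u)) - 20 * u * d u + 5 * d v) * d (d p)
    + 2 * (d (d (d (d u))) - 4 * u * d (d u) - 2 * (d u) ^ 2
        + 3 * d (d v) - 4 * u * (v - a)) * d p
    + 2 * (d (d (d v)) - 3 * u * d v) * p
    - 2 * d (d (d (d (d q)))) + 8 * u * d (d (d q)) + 4 * d u * d (d q)
    + 8 * (v - a) * d q + 2 * d v * q

lemma d_ofNat (n : ℕ) [n.AtLeastTwo] : d (ofNat(n) : A) = 0 := d.map_natCast n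

/-- The operator `M(L - α) - [P, L]` has order two, with coefficients built from the two
equations. -/
lemma residual (a h u v p q f : A) (ha : d a = 0) (hh : d h = 0) (h16 : 16 * h = 1) :
    opM d u p q (opL d u v f - a * f)
        - (opP d h u p q (opL d u v f) - opL d u v (opP d h u p q f))
      = h * (-2 * eq₁ d a u v p q * d (d f) - 2 * d (eq₁ d a u v p q) * d f
          + (-d (d (eq₁ d a u v p q)) + 2 * u * eq₁ d a u v p q + 2 * eq₂ d a u v p q) * f) := by
  have hM : opM d u p q (opL d u v f - a * f)
      = 16 * h * opM d u p q (opL d u v f - a * f) := by rw [h16, one_mul]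
  rw [hM]
  simp only [opM, opL, opP, eq₁, eq₂, map_add, map_sub, map_neg, Derivation.leibniz, pow_two,
    smul_eq_mul, d_ofNat, ha, hh, mul_zero, add_zero, zero_add, sub_zero]
  ring

end DSAlg

namespace DSSmooth

/-- The ring of smooth functions `ℝ → ℝ`. -/
def Sm : Subalgebra ℝ (ℝ → ℝ) where
  carrier := {f | ContDiff ℝ (⊤ : ℕ∞) f}
  mul_mem' {f g} (hf : ContDiff ℝ (⊤ : ℕ∞) f) (hg : ContDiff ℝ (⊤ : ℕ∞) g) :=
    hf.mul hg
  add_mem' {f g} (hf : ContDiff ℝ (⊤ : ℕ∞) f) (hg : ContDiff ℝ (⊤ : ℕ∞) g) :=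
    hf.add hg
  algebraMap_mem' c := (contDiff_const : ContDiff ℝ (⊤ : ℕ∞) fun _ : ℝ => c)

lemma contDiff_deriv {f : ℝ → ℝ} (hf : ContDiff ℝ (⊤ : ℕ∞) f) :
    ContDiff ℝ (⊤ : ℕ∞) (deriv f) :=
  (contDiff_infty_iff_deriv.1 hf).2

lemma diff (f : Sm) (x : ℝ) : DifferentiableAt ℝ f.1 x :=
  (contDiff_infty_iff_deriv.1 f.2).1 x

/-- `d/dx` as a derivation of the ring of smooth functions. -/
def dx : Derivation ℝ Sm Sm :=
  Derivation.mk'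
    { toFun := fun f => ⟨deriv f.1, contDiff_deriv f.2⟩
      map_add' := fun f g => Subtype.ext <| funext fun x => deriv_add (diff f x) (diff g x)
      map_smul' := fun c f => Subtype.ext <| funext fun x => deriv_const_smul c (diff f x) }
    fun f g => Subtype.ext <| funext fun x => by
      change deriv (f.1 * g.1) x = f.1 x * deriv g.1 x + g.1 x * deriv f.1 x
      rw [deriv_mul (diff f x) (diff g x)]
      ring

/-- The constant function `c` as a smooth function. -/
abbrev const (c : ℝ) : Sm := algebraMap ℝ Sm c

open DSAlg

lemma coe_opL (u v f : Sm) : (opL dx u v f).1 = LDS u.1 v.1 f.1 := rfl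

lemma coe_opP (u p q f : Sm) : (opP dx (const (1 / 16)) u p q f).1 = PDS u.1 p.1 q.1 f.1 := by
  funext x
  exact (div_eq_mul_one_div _ (16 : ℝ)).symm

/-- `DSAlg.residual` for smooth functions, evaluated at a point. -/
lemma residual_apply (α : ℝ) (u v p q f : Sm) (x : ℝ) :
    MDS u.1 p.1 q.1 (fun y => LDS u.1 v.1 f.1 y - α * f.1 y) x
        - (PDS u.1 p.1 q.1 (LDS u.1 v.1 f.1) x - LDS u.1 v.1 (PDS u.1 p.1 q.1 f.1) x)
      = 1 / 16 * (-2 * (eq₁ dx (const α) u v p q).1 x * deriv (deriv f.1) x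
          - 2 * (dx (eq₁ dx (const α) u v p q)).1 x * deriv f.1 x
          + (-(dx (dx (eq₁ dx (const α) u v p q))).1 x
              + 2 * u.1 x * (eq₁ dx (const α) u v p q).1 x
              + 2 * (eq₂ dx (const α) u v p q).1 x) * f.1 x) := by
  have h16 : 16 * const (1 / 16) = 1 := by
    rw [← map_ofNat (algebraMap ℝ Sm) 16, const, ← map_mul]
    norm_num
  have h := residual dx (const α) (const (1 / 16)) u v p q f (dx.map_algebraMap _)
    (dx.map_algebraMap _) h16
  have hx := congrFun (congrArg Subtype.val h) x
  rw [← coe_opL, ← coe_opP, ← coe_opP, ← coe_opL]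
  exact hx

/-- The values of `DSAlg.eq₂`, written as in the second equation. -/
lemma eq₂_apply (α : ℝ) (u v p q : Sm) (x : ℝ) :
    (eq₂ dx (const α) u v p q).1 x = 2 * (
        u.1 x * deriv^[5] p.1 x + 4 * deriv u.1 x * deriv^[4] p.1 x
        + 2 * (3 * deriv^[2] u.1 x - 2 * u.1 x ^ 2) * deriv^[3] p.1 x
        + (4 * deriv^[3] u.1 x - 10 * u.1 x * deriv u.1 x + (5 / 2) * deriv v.1 x) * deriv^[2] p.1 x
        + (deriv^[4] u.1 x - 4 * u.1 x * deriv^[2] u.1 x - 2 * (deriv u.1 x) ^ 2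
            + 3 * deriv^[2] v.1 x - 4 * u.1 x * (v.1 x - α)) * deriv p.1 x
        + (deriv^[3] v.1 x - 3 * u.1 x * deriv v.1 x) * p.1 x
        - deriv^[5] q.1 x + 4 * u.1 x * deriv^[3] q.1 x + 2 * deriv u.1 x * deriv^[2] q.1 x
        + 4 * (v.1 x - α) * deriv q.1 x + deriv v.1 x * q.1 x) := by
  have h : (eq₂ dx (const α) u v p q).1 x =
    2 * u.1 x * deriv (deriv (deriv (deriv (deriv p.1)))) x
    + 8 * deriv u.1 x * deriv (deriv (deriv (deriv p.1))) x
    + 4 * (3 * deriv (deriv u.1) x - 2 * u.1 x ^ 2) * deriv (deriv (deriv p.1)) x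
    + (8 * deriv (deriv (deriv u.1)) x - 20 * u.1 x * deriv u.1 x + 5 * deriv v.1 x)
        * deriv (deriv p.1) x
    + 2 * (deriv (deriv (deriv (deriv u.1))) x - 4 * u.1 x * deriv (deriv u.1) x
        - 2 * (deriv u.1 x) ^ 2
        + 3 * deriv (deriv v.1) x - 4 * u.1 x * (v.1 x - α)) * deriv p.1 x
    + 2 * (deriv (deriv (deriv v.1)) x - 3 * u.1 x * deriv v.1 x) * p.1 x
    - 2 * deriv (deriv (deriv (deriv (deriv q.1)))) x
    + 8 * u.1 x * deriv (deriv (deriv q.1)) x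
    + 4 * deriv u.1 x * deriv (deriv q.1) x
    + 8 * (v.1 x - α) * deriv q.1 x + 2 * deriv v.1 x * q.1 x := rfl
  rw [h]
  simp only [Function.iterate_succ, Function.iterate_zero, Function.comp_apply, id]
  ring

end DSSmooth

open DSAlg DSSmooth in
theorem stmt13 (α : ℝ) (u v p q : ℝ → ℝ)
    (hu : ContDiff ℝ (⊤ : ℕ∞) u) (hv : ContDiff ℝ (⊤ : ℕ∞) v)
    (hp : ContDiff ℝ (⊤ : ℕ∞) p) (hq : ContDiff ℝ (⊤ : ℕ∞) q) :
    (∀ (ψ : ℝ → ℝ), ContDiff ℝ (⊤ : ℕ∞) ψ → ∀ x : ℝ,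
      MDS u p q (fun y => LDS u v ψ y - α * ψ y) x =
        PDS u p q (LDS u v ψ) x - LDS u v (PDS u p q ψ) x) ↔
    ((∀ x : ℝ, deriv^[5] p x + 2 * u x * deriv^[3] p x + 8 * deriv u x * deriv^[2] p x
        + 2 * (deriv^[2] u x + 4 * u x ^ 2 + 8 * (v x - α)) * deriv p x
        - 2 * (deriv^[3] u x - 6 * u x * deriv u x - 6 * deriv v x) * p x
        - 10 * deriv^[3] q x + 8 * u x * deriv q x + 4 * deriv u x * q x = 0) ∧
     (∀ x : ℝ, u x * deriv^[5] p x + 4 * deriv u x * deriv^[4] p x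
        + 2 * (3 * deriv^[2] u x - 2 * u x ^ 2) * deriv^[3] p x
        + (4 * deriv^[3] u x - 10 * u x * deriv u x + (5 / 2) * deriv v x) * deriv^[2] p x
        + (deriv^[4] u x - 4 * u x * deriv^[2] u x - 2 * (deriv u x) ^ 2
            + 3 * deriv^[2] v x - 4 * u x * (v x - α)) * deriv p x
        + (deriv^[3] v x - 3 * u x * deriv v x) * p x
        - deriv^[5] q x + 4 * u x * deriv^[3] q x + 2 * deriv u x * deriv^[2] q x
        + 4 * (v x - α) * deriv q x + deriv v x * q x = 0)) := by
  lift u to Sm using hu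
  lift v to Sm using hv
  lift p to Sm using hp
  lift q to Sm using hq
  have key := residual_apply α u v p q
  constructor
  · intro H
    have E₁ : ∀ x, (eq₁ dx (const α) u v p q).1 x = 0 := by
      intro x
      -- At `x` the function `(y - x)²` has value and first derivative zero, second derivative two.
      have hs : ContDiff ℝ (⊤ : ℕ∞) (fun y : ℝ => (y - x) ^ 2) := by fun_prop
      have h1 : deriv (fun y : ℝ => (y - x) ^ 2) = fun y => 2 * (y - x) := by
        funext y
        simp
      have h2 : deriv (fun y : ℝ => 2 * (y - x)) x = 2 := by
        simp
      have h := key ⟨_, hs⟩ x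
      rw [sub_eq_zero.2 (H _ hs x)] at h
      simp only [h1, h2] at h
      linarith
    have E₁_zero : eq₁ dx (const α) u v p q = 0 := Subtype.ext (funext E₁)
    refine ⟨E₁, fun x => ?_⟩
    have h := key 1 x
    rw [sub_eq_zero.2 (H _ (1 : Sm).2 x), E₁_zero] at h
    have h1 : (1 : Sm).1 = fun _ => (1 : ℝ) := rfl
    have h0 : (0 : Sm).1 x = 0 := rfl
    simp only [map_zero, h0, h1, deriv_const'] at h
    have E₂ : (eq₂ dx (const α) u v p q).1 x = 0 := by linarith
    rw [eq₂_apply] at E₂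
    linarith
  · rintro ⟨H₁, H₂⟩ ψ hψ x
    have E₁ : eq₁ dx (const α) u v p q = 0 := Subtype.ext (funext H₁)
    have E₂ : (eq₂ dx (const α) u v p q).1 x = 0 := by
      rw [eq₂_apply, H₂, mul_zero]
    have h := key ⟨ψ, hψ⟩ x
    have h0 : (0 : Sm).1 x = 0 := rfl
    rw [E₁, E₂] at h
    simp only [map_zero, h0] at h
    linarith
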